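/- Let Ω = {(x,y,u,p,q) ∈ ℝ⁵ : x·p + y·q − u > 0} and let f : ℝ⁵ → ℝ be a C¹ function on Ω of the variables (x,y,u,p,q). Then f satisfies on Ω the system f_x + p·f_u = 0, f_y + q·f_u = 0, (x·p + y·q − u)·f_p + 4x·f = 0, (x·p + y·q − u)·f_q + 4y·f = 0 if and only if there exists a constant C ∈ ℝ such that f(x,y,u,p,q) = C/(x·p + y·q − u)⁴ for all (x,y,u,p,q) ∈ Ω. -/

import Mathlib

/-- Points of `ℝ⁵` with coordinates `(x, y, u, p, q)`. -/
abbrev Jet1 : Type := ℝ × ℝ × ℝ × ℝ × ℝ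

/-- Partial derivative with respect to `x`, for a function of `(x, y, u, p, q)`. -/
noncomputable def dX (f : Jet1 → ℝ) (v : Jet1) : ℝ :=
  deriv (fun x => f (x, v.2.1, v.2.2.1, v.2.2.2.1, v.2.2.2.2)) v.1

/-- Partial derivative with respect to `y`, for a function of `(x, y, u, p, q)`. -/
noncomputable def dY (f : Jet1 → ℝ) (v : Jet1) : ℝ :=
  deriv (fun y => f (v.1, y, v.2.2.1, v.2.2.2.1, v.2.2.2.2)) v.2.1

/-- Partial derivative with respect to `u`, for a function of `(x, y, u, p, q)`. -/
noncomputable def dU (f : Jet1 → ℝ) (v : Jet1) : ℝ :=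
  deriv (fun u => f (v.1, v.2.1, u, v.2.2.2.1, v.2.2.2.2)) v.2.2.1

/-- Partial derivative with respect to `p`, for a function of `(x, y, u, p, q)`. -/
noncomputable def dP (f : Jet1 → ℝ) (v : Jet1) : ℝ :=
  deriv (fun p => f (v.1, v.2.1, v.2.2.1, p, v.2.2.2.2)) v.2.2.2.1

/-- Partial derivative with respect to `q`, for a function of `(x, y, u, p, q)`. -/
noncomputable def dQ (f : Jet1 → ℝ) (v : Jet1) : ℝ :=
  deriv (fun q => f (v.1, v.2.1, v.2.2.1, v.2.2.2.1, q)) v.2.2.2.2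


/-- The quantity `x p + y q - u`. -/
noncomputable def titW (v : Jet1) : ℝ := v.1 * v.2.2.2.1 + v.2.1 * v.2.2.2.2 - v.2.2.1

theorem tit_partials (G : Jet1 → ℝ) (v : Jet1) (h : DifferentiableAt ℝ G v) :
    HasDerivAt (fun x => G (x, v.2.1, v.2.2.1, v.2.2.2.1, v.2.2.2.2))
      (fderiv ℝ G v (1, 0, 0, 0, 0)) v.1 ∧
    HasDerivAt (fun y => G (v.1, y, v.2.2.1, v.2.2.2.1, v.2.2.2.2))
      (fderiv ℝ G v (0, 1, 0, 0, 0)) v.2.1 ∧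
    HasDerivAt (fun u => G (v.1, v.2.1, u, v.2.2.2.1, v.2.2.2.2))
      (fderiv ℝ G v (0, 0, 1, 0, 0)) v.2.2.1 ∧
    HasDerivAt (fun p => G (v.1, v.2.1, v.2.2.1, p, v.2.2.2.2))
      (fderiv ℝ G v (0, 0, 0, 1, 0)) v.2.2.2.1 ∧
    HasDerivAt (fun q => G (v.1, v.2.1, v.2.2.1, v.2.2.2.1, q))
      (fderiv ℝ G v (0, 0, 0, 0, 1)) v.2.2.2.2 := by
  obtain ⟨x, y, u, p, q⟩ := v
  have hG := h.hasFDerivAt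
  refine ⟨?_, ?_, ?_, ?_, ?_⟩
  · exact hG.comp_hasDerivAt x ((hasDerivAt_id x).prodMk ((hasDerivAt_const x y).prodMk
      ((hasDerivAt_const x u).prodMk ((hasDerivAt_const x p).prodMk (hasDerivAt_const x q)))))
  · exact hG.comp_hasDerivAt y ((hasDerivAt_const y x).prodMk ((hasDerivAt_id y).prodMk
      ((hasDerivAt_const y u).prodMk ((hasDerivAt_const y p).prodMk (hasDerivAt_const y q)))))
  · exact hG.comp_hasDerivAt u ((hasDerivAt_const u x).prodMk ((hasDerivAt_const u y).prodMk
      ((hasDerivAt_id u).prodMk ((hasDerivAt_const u p).prodMk (hasDerivAt_const u q)))))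
  · exact hG.comp_hasDerivAt p ((hasDerivAt_const p x).prodMk ((hasDerivAt_const p y).prodMk
      ((hasDerivAt_const p u).prodMk ((hasDerivAt_id p).prodMk (hasDerivAt_const p q)))))
  · exact hG.comp_hasDerivAt q ((hasDerivAt_const q x).prodMk ((hasDerivAt_const q y).prodMk
      ((hasDerivAt_const q u).prodMk ((hasDerivAt_const q p).prodMk (hasDerivAt_id q)))))

theorem tit_diffW (v : Jet1) : DifferentiableAt ℝ titW v := by
  unfold titW; fun_prop

theorem tit_contW : Continuous titW := by
  unfold titW; fun_prop

/-- Partials of `f * W^4`. -/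
theorem tit_partials_G (f : Jet1 → ℝ) (v : Jet1) (h : DifferentiableAt ℝ f v) :
    fderiv ℝ (fun v => f v * titW v ^ 4) v (1, 0, 0, 0, 0)
      = dX f v * titW v ^ 4 + f v * (4 * titW v ^ 3 * v.2.2.2.1) ∧
    fderiv ℝ (fun v => f v * titW v ^ 4) v (0, 1, 0, 0, 0)
      = dY f v * titW v ^ 4 + f v * (4 * titW v ^ 3 * v.2.2.2.2) ∧
    fderiv ℝ (fun v => f v * titW v ^ 4) v (0, 0, 1, 0, 0)
      = dU f v * titW v ^ 4 + f v * (4 * titW v ^ 3 * (-1)) ∧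
    fderiv ℝ (fun v => f v * titW v ^ 4) v (0, 0, 0, 1, 0)
      = dP f v * titW v ^ 4 + f v * (4 * titW v ^ 3 * v.1) ∧
    fderiv ℝ (fun v => f v * titW v ^ 4) v (0, 0, 0, 0, 1)
      = dQ f v * titW v ^ 4 + f v * (4 * titW v ^ 3 * v.2.1) := by
  have hG : DifferentiableAt ℝ (fun v => f v * titW v ^ 4) v := h.mul ((tit_diffW v).pow 4)
  obtain ⟨g1, g2, g3, g4, g5⟩ := tit_partials _ v hG
  obtain ⟨f1, f2, f3, f4, f5⟩ := tit_partials _ v h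
  obtain ⟨x, y, u, p, q⟩ := v
  have w1 : HasDerivAt (fun x => titW (x, y, u, p, q)) p x := by
    simpa [titW] using (((hasDerivAt_id x).mul_const p).add_const (y * q)).sub_const u
  have w2 : HasDerivAt (fun y => titW (x, y, u, p, q)) q y := by
    simpa [titW] using (((hasDerivAt_id y).mul_const q).const_add (x * p)).sub_const u
  have w3 : HasDerivAt (fun u => titW (x, y, u, p, q)) (-1) u := by
    simpa [titW] using (hasDerivAt_id u).const_sub (x * p + y * q)
  have w4 : HasDerivAt (fun p => titW (x, y, u, p, q)) x p := by
    simpa [titW] using (((hasDerivAt_id p).const_mul x).add_const (y * q)).sub_const u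
  have w5 : HasDerivAt (fun q => titW (x, y, u, p, q)) y q := by
    simpa [titW] using (((hasDerivAt_id q).const_mul y).const_add (x * p)).sub_const u
  simp only [dX, dY, dU, dP, dQ]
  refine ⟨g1.unique ?_, g2.unique ?_, g3.unique ?_, g4.unique ?_, g5.unique ?_⟩
  · simpa using f1.differentiableAt.hasDerivAt.fun_mul (w1.fun_pow 4)
  · simpa using f2.differentiableAt.hasDerivAt.fun_mul (w2.fun_pow 4)
  · simpa using f3.differentiableAt.hasDerivAt.fun_mul (w3.fun_pow 4)
  · simpa using f4.differentiableAt.hasDerivAt.fun_mul (w4.fun_pow 4)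
  · simpa using f5.differentiableAt.hasDerivAt.fun_mul (w5.fun_pow 4)

theorem tit_open : IsOpen {v : Jet1 | 0 < titW v} := isOpen_lt continuous_const tit_contW

theorem tit_preconn : IsPreconnected {v : Jet1 | 0 < titW v} := by
  have h1 : IsPreconnected {v : Jet1 | 0 < v.2.2.1} := by
    apply Convex.isPreconnected
    intro a ha b hb s t hs ht hst
    exact (convex_Ioi (0 : ℝ)) ha hb hs ht hst
  have h2 := h1.image (fun v : Jet1 =>
    ((v.1, v.2.1, v.1 * v.2.2.2.1 + v.2.1 * v.2.2.2.2 - v.2.2.1, v.2.2.2.1, v.2.2.2.2) : Jet1))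
    (by fun_prop)
  convert h2 using 1
  ext ⟨x, y, u, p, q⟩
  simp only [Set.mem_setOf_eq, Set.mem_image, titW]
  constructor
  · intro h
    exact ⟨(x, y, x * p + y * q - u, p, q), h, by simp⟩
  · rintro ⟨⟨x', y', u', p', q'⟩, h, he⟩
    simp only [Prod.mk.injEq] at he
    obtain ⟨rfl, rfl, rfl, rfl, rfl⟩ := he
    simpa using h

theorem tit_const_p (G : Jet1 → ℝ) (hG : ∀ v, 0 < titW v → DifferentiableAt ℝ G v)
    (hp : ∀ v, 0 < titW v → fderiv ℝ G v (0, 0, 0, 1, 0) = 0) (x y u p p' q : ℝ)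
    (h : 0 < titW (x, y, u, p, q)) (h' : 0 < titW (x, y, u, p', q)) :
    G (x, y, u, p, q) = G (x, y, u, p', q) := by
  have hc : Convex ℝ {r : ℝ | 0 < titW (x, y, u, r, q)} := by
    intro a ha b hb s t hs ht hst
    have e : titW (x, y, u, s • a + t • b, q)
        = s • titW (x, y, u, a, q) + t • titW (x, y, u, b, q) := by
      simp only [titW, smul_eq_mul]
      linear_combination (u - y * q) * hst
    simp only [Set.mem_setOf_eq]
    rw [e]
    exact (convex_Ioi (0 : ℝ)) ha hb hs ht hst
  have hd : ∀ r ∈ {r : ℝ | 0 < titW (x, y, u, r, q)},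
      HasDerivAt (fun r => G (x, y, u, r, q)) 0 r := by
    intro r hr
    have := (tit_partials G (x, y, u, r, q) (hG _ hr)).2.2.2.1
    rwa [hp _ hr] at this
  have := hc.norm_image_sub_le_of_norm_hasDerivWithin_le (C := 0)
    (fun r hr => (hd r hr).hasDerivWithinAt) (by simp) h' h
  simpa [sub_eq_zero] using this

theorem tit_fderiv_zero (G : Jet1 → ℝ) (hG : ∀ v, 0 < titW v → DifferentiableAt ℝ G v)
    (h1 : ∀ v, 0 < titW v →
      fderiv ℝ G v (1, 0, 0, 0, 0) + v.2.2.2.1 * fderiv ℝ G v (0, 0, 1, 0, 0) = 0)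
    (h2 : ∀ v, 0 < titW v →
      fderiv ℝ G v (0, 1, 0, 0, 0) + v.2.2.2.2 * fderiv ℝ G v (0, 0, 1, 0, 0) = 0)
    (hp : ∀ v, 0 < titW v → fderiv ℝ G v (0, 0, 0, 1, 0) = 0)
    (hq : ∀ v, 0 < titW v → fderiv ℝ G v (0, 0, 0, 0, 1) = 0)
    (v : Jet1) (hv : 0 < titW v) : fderiv ℝ G v = 0 := by
  obtain ⟨x, y, u, p, q⟩ := v
  obtain ⟨p', hne, hv'⟩ : ∃ p', p' ≠ p ∧ 0 < titW (x, y, u, p', q) := by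
    rcases le_total 0 x with hx | hx
    · refine ⟨p + 1, by simp, ?_⟩
      simp only [titW] at hv ⊢
      linarith
    · refine ⟨p - 1, by simp, ?_⟩
      simp only [titW] at hv ⊢
      linarith
  obtain ⟨a1, -, a3, -, -⟩ := tit_partials G _ (hG _ hv)
  obtain ⟨b1, -, b3, -, -⟩ := tit_partials G _ (hG _ hv')
  have ex : (fun x => G (x, y, u, p, q)) =ᶠ[nhds x] (fun x => G (x, y, u, p', q)) := by
    have c1 : ∀ᶠ z in nhds x, 0 < titW (z, y, u, p, q) :=
      (tit_contW.comp (by fun_prop : Continuous fun z : ℝ => ((z, y, u, p, q) : Jet1))).continuousAt.eventually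
        (lt_mem_nhds hv)
    have c2 : ∀ᶠ z in nhds x, 0 < titW (z, y, u, p', q) :=
      (tit_contW.comp (by fun_prop : Continuous fun z : ℝ => ((z, y, u, p', q) : Jet1))).continuousAt.eventually
        (lt_mem_nhds hv')
    filter_upwards [c1, c2] with z hz hz'
    exact tit_const_p G hG hp _ _ _ _ _ _ hz hz'
  have eu : (fun u => G (x, y, u, p, q)) =ᶠ[nhds u] (fun u => G (x, y, u, p', q)) := by
    have c1 : ∀ᶠ z in nhds u, 0 < titW (x, y, z, p, q) :=
      (tit_contW.comp (by fun_prop : Continuous fun z : ℝ => ((x, y, z, p, q) : Jet1))).continuousAt.eventually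
        (lt_mem_nhds hv)
    have c2 : ∀ᶠ z in nhds u, 0 < titW (x, y, z, p', q) :=
      (tit_contW.comp (by fun_prop : Continuous fun z : ℝ => ((x, y, z, p', q) : Jet1))).continuousAt.eventually
        (lt_mem_nhds hv')
    filter_upwards [c1, c2] with z hz hz'
    exact tit_const_p G hG hp _ _ _ _ _ _ hz hz'
  have kx := a1.unique (b1.congr_of_eventuallyEq ex)
  have ku := a3.unique (b3.congr_of_eventuallyEq eu)
  have s1 := h1 _ hv
  have s2 := h1 _ hv'
  have s3 := h2 _ hv
  have s4 := hp _ hv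
  have s5 := hq _ hv
  simp only at s1 s2 s3
  rw [← kx, ← ku] at s2
  have u0 : fderiv ℝ G (x, y, u, p, q) (0, 0, 1, 0, 0) = 0 := by
    have : (p' - p) * fderiv ℝ G (x, y, u, p, q) (0, 0, 1, 0, 0) = 0 := by linarith
    exact (mul_eq_zero.mp this).resolve_left (sub_ne_zero.mpr hne)
  rw [u0, mul_zero, add_zero] at s1 s3
  ext
  · simp; exact s1
  · simp; exact s3
  · simp; exact u0
  · simpa using s4
  · simpa using s5

/-- Characterization of the variational integrant factor for the Țițeica operator
(Theorem 5 of the paper): on `Ω = {x·p + y·q − u > 0}`, a C¹ function `f` satisfies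
the system `f_x + p·f_u = 0`, `f_y + q·f_u = 0`, `(x·p+y·q−u)·f_p + 4x·f = 0`,
`(x·p+y·q−u)·f_q + 4y·f = 0` iff `f = C/(x·p + y·q − u)⁴` for some constant `C`. -/
theorem titeica_integrant_factor
    (Ω : Set Jet1)
    (hΩ : Ω = {v : Jet1 | v.1 * v.2.2.2.1 + v.2.1 * v.2.2.2.2 - v.2.2.1 > 0})
    (f : Jet1 → ℝ) (hf : ContDiffOn ℝ 1 f Ω) :
    (∀ v ∈ Ω,
      dX f v + v.2.2.2.1 * dU f v = 0 ∧
      dY f v + v.2.2.2.2 * dU f v = 0 ∧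
      (v.1 * v.2.2.2.1 + v.2.1 * v.2.2.2.2 - v.2.2.1) * dP f v + 4 * v.1 * f v = 0 ∧
      (v.1 * v.2.2.2.1 + v.2.1 * v.2.2.2.2 - v.2.2.1) * dQ f v + 4 * v.2.1 * f v = 0)
    ↔ ∃ C : ℝ, ∀ v ∈ Ω,
        f v = C / (v.1 * v.2.2.2.1 + v.2.1 * v.2.2.2.2 - v.2.2.1) ^ 4 := by
  have hΩ' : Ω = {v : Jet1 | 0 < titW v} := hΩ
  clear hΩ
  subst hΩ'
  have hd : ∀ v, 0 < titW v → DifferentiableAt ℝ f v := fun v hv =>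
    (hf.differentiableOn (by simp)).differentiableAt (tit_open.mem_nhds hv)
  have hG : ∀ v, 0 < titW v → DifferentiableAt ℝ (fun v => f v * titW v ^ 4) v :=
    fun v hv => (hd v hv).mul ((tit_diffW v).pow 4)
  constructor
  · intro H
    have H' : ∀ v, 0 < titW v → fderiv ℝ (fun v => f v * titW v ^ 4) v = 0 := by
      apply tit_fderiv_zero _ hG
      · intro v hv
        obtain ⟨g1, g2, g3, g4, g5⟩ := tit_partials_G f v (hd v hv)
        rw [g1, g3]
        linear_combination titW v ^ 4 * (H v hv).1
      · intro v hv
        obtain ⟨g1, g2, g3, g4, g5⟩ := tit_partials_G f v (hd v hv)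
        rw [g2, g3]
        linear_combination titW v ^ 4 * (H v hv).2.1
      · intro v hv
        obtain ⟨g1, g2, g3, g4, g5⟩ := tit_partials_G f v (hd v hv)
        have h3 : titW v * dP f v + 4 * v.1 * f v = 0 := (H v hv).2.2.1
        rw [g4]
        linear_combination titW v ^ 3 * h3
      · intro v hv
        obtain ⟨g1, g2, g3, g4, g5⟩ := tit_partials_G f v (hd v hv)
        have h3 : titW v * dQ f v + 4 * v.2.1 * f v = 0 := (H v hv).2.2.2
        rw [g5]
        linear_combination titW v ^ 3 * h3
    obtain ⟨C, hC⟩ := tit_open.exists_is_const_of_fderiv_eq_zero tit_preconn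
      (fun v hv => (hG v hv).differentiableWithinAt) H'
    refine ⟨C, fun v hv => ?_⟩
    have hv' : 0 < titW v := hv
    change f v = C / titW v ^ 4
    rw [eq_div_iff (by positivity)]
    exact hC v hv
  · rintro ⟨C, hC⟩ v hv
    have hv' : 0 < titW v := hv
    have e : (fun v => f v * titW v ^ 4) =ᶠ[nhds v] fun _ => C := by
      filter_upwards [tit_open.mem_nhds hv] with z hz
      have hz' : 0 < titW z := hz
      rw [← eq_div_iff (by positivity)]
      exact hC z hz
    have e0 : fderiv ℝ (fun v => f v * titW v ^ 4) v = 0 := by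
      rw [e.fderiv_eq]; simp
    obtain ⟨g1, g2, g3, g4, g5⟩ := tit_partials_G f v (hd v hv)
    rw [e0] at g1 g2 g3 g4 g5
    simp only [ContinuousLinearMap.zero_apply] at g1 g2 g3 g4 g5
    change _ ∧ _ ∧ titW v * dP f v + 4 * v.1 * f v = 0 ∧ titW v * dQ f v + 4 * v.2.1 * f v = 0
    have n4 : titW v ^ 4 ≠ 0 := by positivity
    have n3 : titW v ^ 3 ≠ 0 := by positivity
    refine ⟨mul_left_cancel₀ n4 ?_, mul_left_cancel₀ n4 ?_, mul_left_cancel₀ n3 ?_,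
      mul_left_cancel₀ n3 ?_⟩
    · linear_combination -g1 - v.2.2.2.1 * g3
    · linear_combination -g2 - v.2.2.2.2 * g3
    · linear_combination -g4
    · linear_combination -g5
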